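/- arXiv:2201.10456 — 5 statements merged into one kernel-verified Lean document; each statement's English description precedes it below -/
import Mathlib

section
/- Let M and N be partially ordered sets and let f : M^ω → N^ω be a causal stream function that is monotone with respect to the product orders on M^ω and N^ω. Let S be the least set of stream functions M^ω → N^ω that contains f and is closed under functional stream derivatives (for all h ∈ S and a ∈ M, h_a ∈ S). Then every h ∈ S is causal and monotone, and the output and transition functions of the derived Mealy machine are monotone in both arguments: for all h, h′ ∈ S with h ⪯ h′ and all a, a′ ∈ M with a ≤ a′, one has h[a] ≤ h′[a′] in N and h_a ⪯ h′_{a′}. -/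
/-- Cons a head onto a stream (streams are functions `ℕ → α`). -/
def scons {α : Type*} (a : α) (σ : ℕ → α) : ℕ → α
  | 0 => a
  | n + 1 => σ n

/-- A stream function is causal if its `i`-th output depends only on the first `i+1` inputs. -/
def Causal {M N : Type*} (f : (ℕ → M) → (ℕ → N)) : Prop :=
  ∀ i : ℕ, ∀ σ τ : ℕ → M, (∀ j ≤ i, σ j = τ j) → f σ i = f τ i

/-- Functional stream derivative of `f` on input `a`. -/
def sderiv {M N : Type*} (f : (ℕ → M) → (ℕ → N)) (a : M) : (ℕ → M) → (ℕ → N) :=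
  fun σ i => f (scons a σ) (i + 1)

/-- Output stream of a Mealy machine with transition `T` and output `O`, from state `s`. -/
def mOut {S M N : Type*} (T : S → M → S) (O : S → M → N) : S → (ℕ → M) → ℕ → N
  | s, σ, 0 => O s (σ 0)
  | s, σ, k + 1 => mOut T O (T s (σ 0)) (fun n => σ (n + 1)) k

/-- Every member of the least set of stream functions containing a monotone causal `f` and
closed under functional stream derivatives is causal and monotone, and the output and
transition functions of the derived Mealy machine are monotone in both arguments. -/
theorem derived_mealy_monotone {M N : Type*} [PartialOrder M] [PartialOrder N]
    (f : (ℕ → M) → (ℕ → N)) (hf : Causal f) (hfm : Monotone f)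
    (S : Set ((ℕ → M) → (ℕ → N)))
    (hfS : f ∈ S)
    (hcl : ∀ h ∈ S, ∀ a : M, sderiv h a ∈ S)
    (hleast : ∀ S' : Set ((ℕ → M) → (ℕ → N)),
      f ∈ S' → (∀ h ∈ S', ∀ a : M, sderiv h a ∈ S') → S ⊆ S') :
    (∀ h ∈ S, Causal h ∧ Monotone h) ∧
    (∀ h ∈ S, ∀ h' ∈ S, (∀ σ : ℕ → M, h σ ≤ h' σ) →
      ∀ a a' : M, a ≤ a' →
        (∀ σ : ℕ → M, h (scons a σ) 0 ≤ h' (scons a' σ) 0) ∧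
        (∀ σ : ℕ → M, sderiv h a σ ≤ sderiv h' a' σ)) := by
  have mono : ∀ {a a' : M} {σ τ : ℕ → M}, a ≤ a' → σ ≤ τ → scons a σ ≤ scons a' τ := by
    intro a a' σ τ ha hσ n
    cases n with
    | zero => exact ha
    | succ n => exact hσ n
  have key : ∀ h ∈ S, Causal h ∧ Monotone h := by
    refine hleast {h | Causal h ∧ Monotone h} ⟨hf, hfm⟩ ?_
    rintro h ⟨hc, hm⟩ a
    refine ⟨?_, ?_⟩
    · intro i σ τ hst
      refine hc (i + 1) _ _ ?_
      intro j hj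
      cases j with
      | zero => rfl
      | succ j => exact hst j (Nat.le_of_succ_le_succ hj)
    · intro σ τ hst i
      exact hm (mono le_rfl hst) (i + 1)
  refine ⟨key, ?_⟩
  intro h _ h' hh' hle a a' ha
  have step : ∀ σ : ℕ → M, h (scons a σ) ≤ h' (scons a' σ) := fun σ =>
    (hle _).trans ((key h' hh').2 (mono ha le_rfl))
  exact ⟨fun σ => step σ 0, fun σ i => step σ (i + 1)⟩
end

section
/- Let f : M^ω → N^ω be a causal stream function and let S be the least set of stream functions containing f and closed under functional stream derivatives. Consider the Mealy machine S_f = (S, f, T_S, O_S) where T_S(h)(a) = h_a and O_S(h)(a) = h[a]. Then the output stream of S_f equals f, i.e. !S_f = f. -/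
/-- The Mealy machine `S_f` derived from a causal stream function `f` (states: the least set
of stream functions containing `f` and closed under functional stream derivatives; transition
`T h a = h_a`; output `O h a = h[a]`; initial state `f`) has output stream equal to `f`. -/
theorem derived_mealy_outputStream_eq {M N : Type*}
    (f : (ℕ → M) → (ℕ → N)) (hf : Causal f)
    (S : Set ((ℕ → M) → (ℕ → N))) (hfS : f ∈ S)
    (hcl : ∀ h ∈ S, ∀ a : M, sderiv h a ∈ S)
    (hleast : ∀ S' : Set ((ℕ → M) → (ℕ → N)),
      f ∈ S' → (∀ h ∈ S', ∀ a : M, sderiv h a ∈ S') → S ⊆ S')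
    (T : S → M → S) (O : S → M → N)
    (hT : ∀ (h : S) (a : M), (T h a : (ℕ → M) → (ℕ → N)) = sderiv (h : (ℕ → M) → (ℕ → N)) a)
    (hO : ∀ (h : S) (a : M) (σ : ℕ → M),
      O h a = (h : (ℕ → M) → (ℕ → N)) (scons a σ) 0) :
    mOut T O ⟨f, hfS⟩ = f := by
  have hc : ∀ (a : M) (τ : ℕ → M), a = τ 0 → scons a (fun n => τ (n + 1)) = τ := by
    intro a τ ha
    funext n
    cases n with
    | zero => exact ha
    | succ n => rfl
  have key : ∀ (k : ℕ) (h : S) (σ : ℕ → M),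
      mOut T O h σ k = (h : (ℕ → M) → (ℕ → N)) σ k := by
    intro k
    induction k with
    | zero =>
      intro h σ
      rw [mOut, hO h (σ 0) (fun n => σ (n + 1)), hc _ σ rfl]
    | succ k ih =>
      intro h σ
      rw [mOut, ih, hT, sderiv, hc _ σ rfl]
  funext σ k
  exact key k ⟨f, hfS⟩ σ
end

section
/- Let f : M^ω → N^ω be a causal stream function and let S be the least set of stream functions containing f and closed under functional stream derivatives. If B = (S′, s₀′, T′, O′) is any Mealy machine with input set M and output set N such that !B = f, then the cardinality of S is at most the cardinality of S′. In particular, the Mealy machine S_f = (S, f, T_S, O_S) with T_S(h)(a) = h_a and O_S(h)(a) = h[a] has the smallest state space among all Mealy machines whose output stream is f. -/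
universe u v w

/-- The least set of stream functions containing a causal `f` and closed under functional
stream derivatives has cardinality at most that of the state space of any Mealy machine whose
output stream is `f`: the derived machine `S_f` has the smallest state space. -/
theorem derived_mealy_minimal {M : Type u} {N : Type v} {S' : Type w}
    (f : (ℕ → M) → (ℕ → N)) (hf : Causal f)
    (S : Set ((ℕ → M) → (ℕ → N))) (hfS : f ∈ S)
    (hcl : ∀ h ∈ S, ∀ a : M, sderiv h a ∈ S)
    (hleast : ∀ S'' : Set ((ℕ → M) → (ℕ → N)),
      f ∈ S'' → (∀ h ∈ S'', ∀ a : M, sderiv h a ∈ S'') → S ⊆ S'')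
    (s0' : S') (T' : S' → M → S') (O' : S' → M → N)
    (hB : mOut T' O' s0' = f) :
    Cardinal.lift.{w} (Cardinal.mk ↥S) ≤ Cardinal.lift.{max u v} (Cardinal.mk S') := by
  have hsub : S ⊆ Set.range (mOut T' O') := by
    apply hleast
    · exact ⟨s0', hB⟩
    · rintro _ ⟨s, rfl⟩ a
      exact ⟨T' s a, rfl⟩
  choose g hg using fun h : S => hsub h.2
  refine Cardinal.lift_mk_le_lift_mk_of_injective (f := g) ?_
  intro x y hxy
  apply Subtype.ext
  rw [← hg x, ← hg y, hxy]
end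

section
/- Let M be a nonempty set and N a set. The map sending a causal stream function f : M^ω → N^ω to its family of approximants (f_i)_{i∈ℕ} is a bijection between the set of causal stream functions M^ω → N^ω and the product ∏_{i∈ℕ} (M^{i+1} → N) of sets of functions. -/
/-- For nonempty `M`, the map sending a causal stream function to its family of approximants
`(f_i : M^{i+1} → N)_{i ∈ ℕ}` is a bijection. -/
theorem causal_equiv_approximants {M N : Type*} [Nonempty M] :
    Function.Bijective
      (fun f : {f : (ℕ → M) → (ℕ → N) // Causal f} =>
        (fun i (v : Fin (i + 1) → M) =>
          f.1 (fun j => if h : j < i + 1 then v ⟨j, h⟩ else Classical.arbitrary M) i :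
          (i : ℕ) → (Fin (i + 1) → M) → N)) := by
  constructor
  · rintro ⟨f, hf⟩ ⟨g, hg⟩ h
    apply Subtype.ext
    funext σ i
    have h1 := congrFun (congrFun h i) (fun j : Fin (i + 1) => σ j)
    dsimp only at h1
    have key : ∀ j ≤ i, σ j =
        (fun j => if h : j < i + 1 then σ j else Classical.arbitrary M) j := by
      intro j hj
      have hj' : j < i + 1 := Nat.lt_succ_of_le hj
      simp [hj']
    exact ((hf i _ _ key).trans h1).trans (hg i _ _ key).symm
  · intro F
    refine ⟨⟨fun σ i => F i (fun j => σ j), ?_⟩, ?_⟩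
    · intro i σ τ h
      have : (fun j : Fin (i + 1) => σ j) = fun j : Fin (i + 1) => τ j :=
        funext fun j => h j (Nat.le_of_lt_succ j.2)
      exact congrArg (F i) this
    · funext i v
      refine congrArg (F i) ?_
      funext j
      exact dif_pos j.2
end

section
/- Let A = (S, s₀, T, O) be a Mealy machine with input set M, output set N, and finite state set S. Then the least set of stream functions M^ω → N^ω containing the output stream !A and closed under functional stream derivatives (for all h in the set and a ∈ M, h_a is in the set) is finite, of cardinality at most the cardinality of S. -/
/-- For a Mealy machine with finite state set `S`, the least set of stream functions
containing the output stream `!A` and closed under functional stream derivatives is finite,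
of cardinality at most the cardinality of `S`. -/
theorem derivative_closure_finite {M N S : Type*} [Fintype S]
    (s0 : S) (T : S → M → S) (O : S → M → N)
    (S' : Set ((ℕ → M) → (ℕ → N)))
    (h0 : mOut T O s0 ∈ S')
    (hcl : ∀ h ∈ S', ∀ a : M, sderiv h a ∈ S')
    (hleast : ∀ S'' : Set ((ℕ → M) → (ℕ → N)),
      mOut T O s0 ∈ S'' → (∀ h ∈ S'', ∀ a : M, sderiv h a ∈ S'') → S' ⊆ S'') :
    S'.Finite ∧ Nat.card ↥S' ≤ Fintype.card S := by
  have hsub : S' ⊆ Set.range (mOut T O) := by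
    apply hleast
    · exact ⟨s0, rfl⟩
    · rintro _ ⟨s, rfl⟩ a
      refine ⟨T s a, ?_⟩
      funext σ i
      simp only [sderiv, mOut, scons]
  have hfin : (Set.range (mOut T O)).Finite := Set.finite_range _
  refine ⟨hfin.subset hsub, ?_⟩
  calc Nat.card ↥S' ≤ Nat.card ↥(Set.range (mOut T O)) := Nat.card_mono hfin hsub
    _ ≤ Nat.card S := Finite.card_range_le _
    _ = Fintype.card S := Nat.card_eq_fintype_card
end
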